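/- Assume CH. Then there exists a set A ⊆ ℝ² such that for every topological embedding h : ℝ → ℝ² the preimage h⁻¹(A) is a strong Luzin set, and moreover A is a Hamel basis of ℝ² over ℚ. -/

import Mathlib

open Cardinal MeasureTheory Set
open scoped Pointwise

/-- `I` is a σ-ideal on `ℝ`. -/
def IsSigmaIdeal (I : Set (Set ℝ)) : Prop :=
  ∅ ∈ I ∧ (∀ A B : Set ℝ, A ⊆ B → B ∈ I → A ∈ I) ∧
    ∀ f : ℕ → Set ℝ, (∀ n, f n ∈ I) → (⋃ n, f n) ∈ I

/-- The standing assumptions on the σ-ideal `I`: nontriviality, translation and scale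
invariance, Borel base and the Steinhaus property. -/
def StandingIdeal (I : Set (Set ℝ)) : Prop :=
  IsSigmaIdeal I ∧
  Set.univ ∉ I ∧
  (∀ x : ℝ, ∀ S ∈ I, (fun y => x + y) '' S ∈ I) ∧
  (∀ x : ℝ, ∀ S ∈ I, (fun y => x * y) '' S ∈ I) ∧
  (∀ S ∈ I, ∃ B ∈ I, MeasurableSet B ∧ S ⊆ B) ∧
  (∀ A B : Set ℝ, MeasurableSet A → MeasurableSet B → A ∉ I → B ∉ I →
    (interior (A - B)).Nonempty)

/-- `L` is an `I`-Luzin set. -/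
def IsLuzinFor (I : Set (Set ℝ)) (L : Set ℝ) : Prop :=
  Cardinal.mk L = Cardinal.continuum ∧ ∀ S ∈ I, (L ∩ S).Countable

/-- `L` is a strong `I`-Luzin set. -/
def IsStrongLuzinFor (I : Set (Set ℝ)) (L : Set ℝ) : Prop :=
  IsLuzinFor I L ∧ ∀ B : Set ℝ, MeasurableSet B → B ∉ I → ¬ (L ∩ B).Countable

/-- `L` is a Luzin set. -/
def IsLuzin (L : Set ℝ) : Prop :=
  Cardinal.mk L = Cardinal.continuum ∧ ∀ M : Set ℝ, IsMeagre M → (L ∩ M).Countable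

/-- `L` is a strong Luzin set. -/
def IsStrongLuzin (L : Set ℝ) : Prop :=
  IsLuzin L ∧ ∀ B : Set ℝ, MeasurableSet B → ¬ IsMeagre B → ¬ (L ∩ B).Countable

/-- `S` is a Sierpiński set. -/
def IsSierpinski (S : Set ℝ) : Prop :=
  Cardinal.mk S = Cardinal.continuum ∧ ∀ N : Set ℝ, volume N = 0 → (S ∩ N).Countable

/-- `S` is a strong Sierpiński set. -/
def IsStrongSierpinski (S : Set ℝ) : Prop :=
  IsSierpinski S ∧ ∀ B : Set ℝ, MeasurableSet B → 0 < volume B → ¬ (S ∩ B).Countable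

/-- `X` is a Bernstein set. -/
def IsBernstein (X : Set ℝ) : Prop :=
  ∀ P : Set ℝ, Perfect P → P.Nonempty → (P ∩ X).Nonempty ∧ (P ∩ Xᶜ).Nonempty

/-- `A ⊆ ℝ²` is completely `𝓜`-nonmeasurable. -/
def CompletelyMeagerNonmeasurable (A : Set (ℝ × ℝ)) : Prop :=
  ∀ B : Set (ℝ × ℝ), MeasurableSet B → ¬ IsMeagre B → (A ∩ B).Nonempty ∧ ¬ B ⊆ A

/-- `A ⊆ ℝ²` is completely `𝓝`-nonmeasurable. -/
def CompletelyNullNonmeasurable (A : Set (ℝ × ℝ)) : Prop :=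
  ∀ B : Set (ℝ × ℝ), MeasurableSet B → 0 < volume B → (A ∩ B).Nonempty ∧ ¬ B ⊆ A

/-- `n`-fold Minkowski sum (with `nFoldSum A 0 = {0}`). -/
def nFoldSum (A : Set ℝ) : ℕ → Set ℝ
  | 0 => {0}
  | n + 1 => nFoldSum A n + A

/-!
Let `l` be the filter dual to the σ-ideal generated by the compact totally disconnected subsets of
the plane. A closed subset of the line is totally disconnected iff it is nowhere dense, so for every
continuous injection `h` of the line into the plane, `comap h l` is the filter of residual sets.
Hence one set `A` that is a strong Luzin set relative to `l` has strong Luzin sets as preimages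
under all such `h`.

Under CH there are only `ℵ₁` pairs `(v, B)` of a point and a Borel set, and Borel sets form a base
of the σ-ideal. Well-order the pairs with countable initial segments and build `A` by transfinite
recursion as an increasing union of countable linearly independent sets. At stage `(v, B)`, all new
points avoid the countably many small Borel sets seen before; one new point lies in `B` unless `B`
is small, and, for a generic `b`, the new points `b` and `v - b` put `v` in the span.
-/

open Filter Topology

universe u v

section Transfinite

variable {ι α : Type*} [LinearOrder ι] [WellFoundedLT ι]

theorem exists_monotone_of_forall_exists_extension [CompleteLattice α] {p : α → Prop}
    {R : ι → α → α → Prop}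
    (hsup : ∀ (i : ι) (f : Iio i → α), Monotone f → (∀ j, p (f j)) → p (⨆ j, f j))
    (hext : ∀ i a, p a → ∃ b, a ≤ b ∧ p b ∧ R i a b) :
    ∃ f : ι → α, Monotone f ∧ ∀ i, p (f i) ∧ R i (⨆ j : Iio i, f j) (f i) := by
  choose! g hle hp hR using hext
  let f : ι → α := wellFounded_lt.fix fun i ih ↦ g i (⨆ j : Iio i, ih j j.2)
  have f_eq (i : ι) : f i = g i (⨆ j : Iio i, f j) := WellFounded.fix_eq _ _ _
  have sup_le_of_p {i : ι} (h : p (⨆ j : Iio i, f j)) : ⨆ j : Iio i, f j ≤ f i :=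
    (hle i _ h).trans_eq (f_eq i).symm
  have p_sup (i : ι) : p (⨆ j : Iio i, f j) := by
    induction i using (wellFounded_lt (α := ι)).induction with
    | _ i ih =>
      refine hsup i _ (fun j k hjk ↦ ?_) fun j ↦ f_eq j ▸ hp _ _ (ih j j.2)
      obtain rfl | hjk := hjk.eq_or_lt
      · exact le_rfl
      · exact (le_iSup (fun m : Iio k.1 ↦ f m) ⟨j, hjk⟩).trans (sup_le_of_p (ih k k.2))
  refine ⟨f, fun i j hij ↦ ?_, fun i ↦ ?_⟩
  · obtain rfl | hij := hij.eq_or_lt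
    · exact le_rfl
    · exact (le_iSup (fun k : Iio j ↦ f k) ⟨i, hij⟩).trans (sup_le_of_p (p_sup j))
  · rw [f_eq i]
    exact ⟨hp i _ (p_sup i), hR i _ (p_sup i)⟩

theorem exists_mem_diff_iUnion_Iio {f : ι → Set α} {x : α} (hx : x ∈ ⋃ i, f i) :
    ∃ i, x ∈ f i \ ⋃ j : Iio i, f j := by
  obtain ⟨i, hi, hmin⟩ := wellFounded_lt.has_min {i | x ∈ f i} (mem_iUnion.1 hx)
  refine ⟨i, hi, fun hmem ↦ ?_⟩
  obtain ⟨j, hj⟩ := mem_iUnion.1 hmem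
  exact hmin j hj j.2

end Transfinite

section Cardinality

theorem exists_wellOrder_countable_Iio {ι : Type*} (hι : #ι ≤ ℵ₁) :
    ∃ (_ : LinearOrder ι) (_ : WellFoundedLT ι), ∀ i : ι, (Iio i).Countable := by
  obtain ⟨_, _, hord⟩ := exists_ord_eq_type_lt ι
  refine ⟨_, ‹_›, fun i ↦ ?_⟩
  rw [← le_aleph0_iff_set_countable, ← lt_aleph_one_iff]
  exact (mk_Iio_lt i hord).trans_le hι

theorem mk_measurableSet_le_continuum (X : Type*) [MeasurableSpace X]
    [MeasurableSpace.CountablyGenerated X] : #{s : Set X // MeasurableSet s} ≤ 𝔠 := by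
  obtain ⟨b, hb, hgen⟩ := MeasurableSpace.CountablyGenerated.isCountablyGenerated (α := X)
  subst hgen
  exact MeasurableSpace.cardinal_measurableSet_le_continuum
    ((le_aleph0_iff_set_countable.2 hb).trans aleph0_le_continuum)

theorem mk_le_continuum_of_countablyGenerated (X : Type*) [MeasurableSpace X]
    [MeasurableSpace.CountablyGenerated X] [MeasurableSingletonClass X] : #X ≤ 𝔠 := by
  refine (mk_le_of_injective (f := fun x : X ↦
    (⟨{x}, measurableSet_singleton x⟩ : {s : Set X // MeasurableSet s})) fun x y hxy ↦ ?_).trans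
    (mk_measurableSet_le_continuum X)
  simpa using hxy

theorem continuum_eq_aleph_one_of_universe (hCH : 𝔠 = (ℵ₁ : Cardinal.{u})) :
    𝔠 = (ℵ₁ : Cardinal.{v}) :=
  lift_eq_aleph_one.{v, u}.1 <|
    (lift_continuum.trans lift_continuum.{v, u}.symm).trans (lift_eq_aleph_one.{u, v}.2 hCH)

end Cardinality

section CountableInterFilter

variable {X Y : Type*} {l : Filter X}

theorem compl_mem_of_countable [CountableInterFilter l] (hl : l ≤ cofinite)
    {D : Set X} (hD : D.Countable) : Dᶜ ∈ l := by
  rw [← biUnion_of_singleton D, compl_iUnion₂, countable_bInter_mem hD]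
  exact fun x _ ↦ le_cofinite_iff_compl_singleton_mem.1 hl x

/-- `A` is a strong Luzin set relative to the σ-ideal `{s | sᶜ ∈ l}`; the case of meagre sets is
`l = residual ℝ`. The condition that `A` has cardinality `𝔠` is left out: under CH it is implied
when `l` is proper and the space itself has cardinality at most `𝔠`. -/
structure IsStrongLuzinAlong [MeasurableSpace X] (l : Filter X) (A : Set X) : Prop where
  countable_diff : ∀ S ∈ l, (A \ S).Countable
  not_countable_inter : ∀ B, MeasurableSet B → (∃ᶠ x in l, x ∈ B) → ¬(A ∩ B).Countable

variable [MeasurableSpace X] [MeasurableSpace Y]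

/- Deleting a countable set from a Borel set that is not small leaves such a Borel set, so meeting
each of them once already means meeting each of them uncountably often. -/
theorem isStrongLuzinAlong_of_forall_measurableSet [MeasurableSingletonClass X]
    [CountableInterFilter l] (hl : l ≤ cofinite)
    (hbase : ∀ S ∈ l, ∃ T ∈ l, T ⊆ S ∧ MeasurableSet T) {A : Set X}
    (hsmall : ∀ B, MeasurableSet B → Bᶜ ∈ l → (A ∩ B).Countable)
    (hlarge : ∀ B, MeasurableSet B → (∃ᶠ x in l, x ∈ B) → (A ∩ B).Nonempty) :
    IsStrongLuzinAlong l A where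
  countable_diff S hS := by
    obtain ⟨T, hT, hTS, hTm⟩ := hbase S hS
    exact (hsmall Tᶜ hTm.compl (by rwa [compl_compl])).mono (sdiff_subset_sdiff_right hTS)
  not_countable_inter B hB hfreq hcount := by
    have hfreq' : ∃ᶠ x in l, x ∈ B \ (A ∩ B) :=
      hfreq.and_eventually (compl_mem_of_countable hl hcount)
    obtain ⟨x, hxA, hxB, hx⟩ := hlarge _ (hB.diff hcount.measurableSet) hfreq'
    exact hx ⟨hxA, hxB⟩

theorem IsStrongLuzinAlong.preimage {l : Filter Y} {A : Set Y} (hA : IsStrongLuzinAlong l A)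
    {h : X → Y} (hh : MeasurableEmbedding h) : IsStrongLuzinAlong (comap h l) (h ⁻¹' A) where
  countable_diff := by
    rintro S ⟨T, hT, hTS⟩
    exact ((hA.countable_diff T hT).preimage hh.injective).mono (sdiff_subset_sdiff_right hTS)
  not_countable_inter B hB hfreq hcount := by
    have hfreq' : ∃ᶠ y in l, y ∈ h '' B := by
      simpa only [frequently_comap, mem_image, and_comm] using hfreq
    refine hA.not_countable_inter _ (hh.measurableSet_image.2 hB) hfreq' ?_
    rw [← image_preimage_inter]
    exact hcount.image h

theorem IsStrongLuzinAlong.isStrongLuzin (hCH : 𝔠 = (ℵ₁ : Cardinal.{0})) {L : Set ℝ}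
    (hL : IsStrongLuzinAlong (residual ℝ) L) : IsStrongLuzin L := by
  refine ⟨⟨?_, fun M hM ↦ by simpa only [sdiff_compl] using hL.countable_diff _ hM⟩,
    hL.not_countable_inter⟩
  have huncountable : ¬L.Countable := fun hcount ↦
    hL.not_countable_inter univ .univ (not_isMeagre_of_isOpen isOpen_univ univ_nonempty)
      (by rwa [inter_univ])
  refine ((mk_set_le L).trans_eq mk_real).antisymm ?_
  rwa [hCH, ← not_lt, lt_aleph_one_iff, le_aleph0_iff_set_countable]

end CountableInterFilter

section Basis

variable {𝕜 V : Type*} [DivisionRing 𝕜] [AddCommGroup V] [Module 𝕜 V]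

variable (𝕜) in
/-- The countable linearly independent sets, which approximate the basis in the recursion. -/
def IsCountableIndep (D : Set V) : Prop :=
  D.Countable ∧ LinearIndepOn 𝕜 id D

protected theorem IsCountableIndep.insert {D : Set V} (hD : IsCountableIndep 𝕜 D) {a : V}
    (ha : a ∉ Submodule.span 𝕜 D) : IsCountableIndep 𝕜 (insert a D) :=
  ⟨hD.1.insert a, hD.2.id_insert ha⟩

protected theorem IsCountableIndep.iUnion {ι : Type*} [LinearOrder ι] [Countable ι] {f : ι → Set V}
    (hmono : Monotone f) (hf : ∀ i, IsCountableIndep 𝕜 (f i)) : IsCountableIndep 𝕜 (⋃ i, f i) :=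
  ⟨countable_iUnion fun i ↦ (hf i).1,
    linearIndepOn_iUnion_of_directed hmono.directed_le fun i ↦ (hf i).2⟩

variable [Countable 𝕜] {l : Filter V} [CountableInterFilter l]

theorem eventually_notMem_span (hl : l ≤ cofinite) {D : Set V} (hD : D.Countable) :
    ∀ᶠ x in l, x ∉ Submodule.span 𝕜 D := by
  have := hD.to_subtype
  have hspan : Countable (Submodule.span 𝕜 (range ((↑) : D → V))) := inferInstance
  rw [Subtype.range_coe] at hspan
  exact compl_mem_of_countable hl (countable_coe_iff.1 hspan)

theorem IsCountableIndep.exists_extension_inter_nonempty (hl : l ≤ cofinite) {D S : Set V}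
    (hD : IsCountableIndep 𝕜 D) (hS : S ∈ l) (P : Set V) :
    ∃ D', D ⊆ D' ∧ D' ⊆ D ∪ S ∧ IsCountableIndep 𝕜 D' ∧
      ((∃ᶠ x in l, x ∈ P) → (D' ∩ P).Nonempty) := by
  by_cases hP : ∃ᶠ x in l, x ∈ P
  · obtain ⟨a, haP, haS, ha⟩ :=
      (hP.and_eventually (inter_mem hS (eventually_notMem_span (𝕜 := 𝕜) hl hD.1))).exists
    exact ⟨insert a D, subset_insert a D, insert_subset (.inr haS) subset_union_left, hD.insert ha,
      fun _ ↦ ⟨a, mem_insert a D, haP⟩⟩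
  · exact ⟨D, subset_rfl, subset_union_left, hD, fun h ↦ (hP h).elim⟩

theorem IsCountableIndep.exists_extension_mem_span [l.NeBot] (hl : l ≤ cofinite)
    {D S : Set V} (hD : IsCountableIndep 𝕜 D) (hS : S ∈ l) {v : V}
    (hsub : Tendsto (v - ·) l l) :
    ∃ D', D ⊆ D' ∧ D' ⊆ D ∪ S ∧ IsCountableIndep 𝕜 D' ∧ v ∈ Submodule.span 𝕜 D' := by
  by_cases hv : v ∈ Submodule.span 𝕜 D
  · exact ⟨D, subset_rfl, subset_union_left, hD, hv⟩
  obtain ⟨b, ⟨hbS, hvbS⟩, hb⟩ : ∃ b, (b ∈ S ∧ v - b ∈ S) ∧ b ∉ Submodule.span 𝕜 (insert v D) :=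
    nonempty_of_mem (inter_mem (inter_mem hS (hsub hS)) (eventually_notMem_span hl (hD.1.insert v)))
  have hbD : b ∉ Submodule.span 𝕜 D := fun h ↦ hb (Submodule.span_mono (subset_insert v D) h)
  have hvb : v - b ∉ Submodule.span 𝕜 (insert b D) := fun h ↦ by
    refine hb (mem_span_insert_exchange ?_ hv)
    simpa using add_mem h (Submodule.subset_span (mem_insert b D))
  refine ⟨insert (v - b) (insert b D), (subset_insert _ _).trans (subset_insert _ _),
    insert_subset (.inr hvbS) (insert_subset (.inr hbS) subset_union_left),
    (hD.insert hbD).insert hvb, ?_⟩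
  rw [← sub_add_cancel v b]
  exact add_mem (Submodule.subset_span (by simp)) (Submodule.subset_span (by simp))

theorem IsCountableIndep.exists_extension [l.NeBot] (hl : l ≤ cofinite)
    {D S : Set V} (hD : IsCountableIndep 𝕜 D) (hS : S ∈ l) {v : V}
    (hsub : Tendsto (v - ·) l l) (P : Set V) :
    ∃ D', D ⊆ D' ∧ IsCountableIndep 𝕜 D' ∧ D' ⊆ D ∪ S ∧ v ∈ Submodule.span 𝕜 D' ∧
      ((∃ᶠ x in l, x ∈ P) → (D' ∩ P).Nonempty) := by
  obtain ⟨D₁, hDD₁, hD₁S, hD₁, hP⟩ := hD.exists_extension_inter_nonempty hl hS P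
  obtain ⟨D₂, hD₁D₂, hD₂S, hD₂, hv⟩ := hD₁.exists_extension_mem_span hl hS hsub
  exact ⟨D₂, hDD₁.trans hD₁D₂, hD₂,
    hD₂S.trans (union_subset hD₁S subset_union_right), hv,
    fun h ↦ (hP h).mono (inter_subset_inter_left P hD₁D₂)⟩

theorem exists_linearIndepOn_of_countable_Iio {ι : Type*} [LinearOrder ι] [WellFoundedLT ι]
    (hι : ∀ i : ι, (Iio i).Countable) [l.NeBot] (hl : l ≤ cofinite)
    (hsub : ∀ v : V, Tendsto (v - ·) l l) (v : ι → V) (B : ι → Set V) :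
    ∃ A : Set V, LinearIndepOn 𝕜 id A ∧ ∀ i, v i ∈ Submodule.span 𝕜 A ∧
      ((B i)ᶜ ∈ l → (A ∩ B i).Countable) ∧ ((∃ᶠ x in l, x ∈ B i) → (A ∩ B i).Nonempty) := by
  let S (i : ι) : Set V := ⋂ j ∈ {j ∈ Iio i | (B j)ᶜ ∈ l}, (B j)ᶜ
  have hS (i : ι) : S i ∈ l :=
    (countable_bInter_mem ((hι i).mono (sep_subset _ _))).2 fun j hj ↦ hj.2
  obtain ⟨f, hmono, hf⟩ := exists_monotone_of_forall_exists_extension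
    (p := IsCountableIndep 𝕜)
    (R := fun i D D' ↦ D' ⊆ D ∪ S i ∧ v i ∈ Submodule.span 𝕜 D' ∧
      ((∃ᶠ x in l, x ∈ B i) → (D' ∩ B i).Nonempty))
    (fun i f hmono hf ↦ by
      have := (hι i).to_subtype
      exact IsCountableIndep.iUnion hmono hf)
    (fun i D hD ↦ hD.exists_extension hl (hS i) (hsub (v i)) (B i))
  choose hindep hnew hspan hmeet using hf
  have hsubset (i : ι) : f i ⊆ ⋃ i, f i := subset_iUnion f i
  refine ⟨⋃ i, f i, linearIndepOn_iUnion_of_directed hmono.directed_le fun i ↦ (hindep i).2,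
    fun i ↦ ⟨Submodule.span_mono (hsubset i) (hspan i), fun hB ↦ (hindep i).1.mono ?_,
      fun hB ↦ (hmeet i hB).mono (inter_subset_inter_left _ (hsubset i))⟩⟩
  rintro x ⟨hx, hxB⟩
  obtain ⟨j, hxj, hxold⟩ := exists_mem_diff_iUnion_Iio hx
  obtain hji | hij := le_or_gt j i
  · exact hmono hji hxj
  · have hxS : x ∈ S j := (hnew j hxj).resolve_left hxold
    exact (mem_iInter₂.1 hxS i ⟨hij, hB⟩ hxB).elim

end Basis

theorem exists_basis_isStrongLuzinAlong (𝕜 : Type*) {V : Type u} [DivisionRing 𝕜] [Countable 𝕜]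
    [AddCommGroup V] [Module 𝕜 V] [MeasurableSpace V] [MeasurableSpace.CountablyGenerated V]
    [MeasurableSingletonClass V] (hCH : 𝔠 = (ℵ₁ : Cardinal.{u})) {l : Filter V}
    [CountableInterFilter l] [l.NeBot] (hl : l ≤ cofinite)
    (hbase : ∀ S ∈ l, ∃ T ∈ l, T ⊆ S ∧ MeasurableSet T) (hsub : ∀ v : V, Tendsto (v - ·) l l) :
    ∃ A : Set V, IsStrongLuzinAlong l A ∧ LinearIndependent 𝕜 ((↑) : A → V) ∧
      Submodule.span 𝕜 A = ⊤ := by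
  have hcard : #(V × {B : Set V // MeasurableSet B}) ≤ ℵ₁ := by
    rw [mk_prod, lift_id, lift_id, ← hCH]
    exact mul_le_of_le aleph0_le_continuum (mk_le_continuum_of_countablyGenerated V)
      (mk_measurableSet_le_continuum V)
  obtain ⟨_, _, hIio⟩ := exists_wellOrder_countable_Iio hcard
  obtain ⟨A, hindep, hA⟩ := exists_linearIndepOn_of_countable_Iio (𝕜 := 𝕜) hIio hl hsub
    Prod.fst fun i ↦ i.2.1
  refine ⟨A, isStrongLuzinAlong_of_forall_measurableSet hl hbase
    (fun B hB ↦ (hA (0, ⟨B, hB⟩)).2.1) fun B hB ↦ (hA (0, ⟨B, hB⟩)).2.2, hindep, ?_⟩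
  exact Submodule.eq_top_iff'.2 fun v ↦ (hA (v, ⟨∅, .empty⟩)).1

section CoTotDisc

variable {X Y : Type*} [TopologicalSpace X] [TopologicalSpace Y]

variable (X) in
/-- The filter dual to the σ-ideal generated by the compact totally disconnected sets. -/
def coTotDisc : Filter X :=
  countableGenerate {s | IsCompact sᶜ ∧ IsTotallyDisconnected sᶜ}

instance : CountableInterFilter (coTotDisc X) :=
  inferInstanceAs (CountableInterFilter (countableGenerate _))

theorem le_coTotDisc_iff {l : Filter X} [CountableInterFilter l] :
    l ≤ coTotDisc X ↔ ∀ K : Set X, IsCompact K → IsTotallyDisconnected K → Kᶜ ∈ l := by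
  rw [coTotDisc, le_countableGenerate_iff_of_countableInterFilter]
  refine ⟨fun h K hK hKtd ↦ h ?_, fun h s hs ↦ compl_compl s ▸ h sᶜ hs.1 hs.2⟩
  simpa only [mem_ofPred_eq, compl_compl] using ⟨hK, hKtd⟩

theorem compl_mem_coTotDisc_of_isCompact {K : Set X} (hK : IsCompact K)
    (hKtd : IsTotallyDisconnected K) : Kᶜ ∈ coTotDisc X :=
  le_coTotDisc_iff.1 le_rfl K hK hKtd

theorem compl_mem_coTotDisc_of_isClosed [SigmaCompactSpace X] {F : Set X} (hF : IsClosed F)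
    (hFtd : IsTotallyDisconnected F) : Fᶜ ∈ coTotDisc X := by
  rw [← inter_univ F, ← iUnion_compactCovering X, inter_iUnion, compl_iUnion,
    countable_iInter_mem]
  exact fun n ↦ compl_mem_coTotDisc_of_isCompact ((isCompact_compactCovering X n).inter_left hF)
    fun t ht ↦ hFtd t (ht.trans inter_subset_left)

theorem coTotDisc_le_cofinite : coTotDisc X ≤ cofinite :=
  le_cofinite_iff_compl_singleton_mem.2 fun _ ↦
    compl_mem_coTotDisc_of_isCompact isCompact_singleton isTotallyDisconnected_singleton

theorem exists_measurableSet_subset_of_mem_coTotDisc [T2Space X] [MeasurableSpace X]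
    [OpensMeasurableSpace X] {S : Set X} (hS : S ∈ coTotDisc X) :
    ∃ T ∈ coTotDisc X, T ⊆ S ∧ MeasurableSet T := by
  obtain ⟨𝒯, h𝒯, hcount, hsub⟩ := mem_countableGenerate_iff.1 hS
  refine ⟨⋂₀ 𝒯, mem_countableGenerate_iff.2 ⟨𝒯, h𝒯, hcount, subset_rfl⟩, hsub,
    .sInter hcount fun T hT ↦ ?_⟩
  exact compl_compl T ▸ (h𝒯 hT).1.measurableSet.compl

theorem isTotallyDisconnected_image_of_isCompact [T2Space Y] {h : X → Y} (hh : Continuous h)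
    (hinj : Function.Injective h) {K : Set X} (hK : IsCompact K)
    (hKtd : IsTotallyDisconnected K) : IsTotallyDisconnected (h '' K) := by
  have := isCompact_iff_compactSpace.1 hK
  have hemb : IsClosedEmbedding (K.domRestrict h) :=
    (hh.comp continuous_subtype_val).isClosedEmbedding (hinj.comp Subtype.val_injective)
  rw [← range_domRestrict, hemb.isEmbedding.isTotallyDisconnected_range]
  exact totallyDisconnectedSpace_subtype_iff.2 hKtd

theorem comap_coTotDisc_le [T2Space Y] {h : X → Y} (hh : Continuous h)
    (hinj : Function.Injective h) : comap h (coTotDisc Y) ≤ coTotDisc X :=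
  le_coTotDisc_iff.2 fun K hK hKtd ↦ by
    rw [← preimage_image_eq K hinj, ← preimage_compl]
    exact preimage_mem_comap
      (compl_mem_coTotDisc_of_isCompact (hK.image hh)
        (isTotallyDisconnected_image_of_isCompact hh hinj hK hKtd))

theorem comap_coTotDisc [SigmaCompactSpace X] [T2Space Y] {h : X → Y} (hh : Continuous h)
    (hinj : Function.Injective h) : comap h (coTotDisc Y) = coTotDisc X := by
  refine (comap_coTotDisc_le hh hinj).antisymm
    (map_le_iff_le_comap.1 <| le_coTotDisc_iff.2 fun K hK hKtd ↦ ?_)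
  refine compl_mem_coTotDisc_of_isClosed (hK.isClosed.preimage hh)
    (isTotallyDisconnected_of_image hh.continuousOn hinj ?_)
  exact fun t ht ↦ hKtd t (ht.trans (image_preimage_subset h K))

theorem tendsto_coTotDisc [T2Space X] (e : X ≃ₜ Y) :
    Tendsto e (coTotDisc X) (coTotDisc Y) :=
  (comap_equiv_symm e.toEquiv _).ge.trans (comap_coTotDisc_le e.symm.continuous e.symm.injective)

end CoTotDisc

section LinearOrder

variable {X : Type*} [ConditionallyCompleteLinearOrder X] [DenselyOrdered X] [TopologicalSpace X]
  [OrderTopology X]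

theorem isTotallyDisconnected_iff_interior_eq_empty [Nontrivial X] {s : Set X} :
    IsTotallyDisconnected s ↔ interior s = ∅ := by
  rw [isTotallyDisconnected_iff_lt, ← not_nonempty_iff_eq_empty]
  refine ⟨fun hs hne ↦ ?_, fun hs x _ y _ hxy ↦ ?_⟩
  · obtain ⟨x, y, hxy, hIoo⟩ := isOpen_interior.exists_Ioo_subset hne
    obtain ⟨a, hxa, hay⟩ := exists_between hxy
    obtain ⟨b, hab, hby⟩ := exists_between hay
    have hIcc : Icc a b ⊆ s := (Icc_subset_Ioo hxa hby).trans (hIoo.trans interior_subset)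
    obtain ⟨z, hzs, hz⟩ := hs a (hIcc ⟨le_rfl, hab.le⟩) b (hIcc ⟨hab.le, le_rfl⟩) hab
    exact hzs (hIcc (Ioo_subset_Icc_self hz))
  · by_contra! hIoo
    exact hs ((nonempty_Ioo.2 hxy).mono
      (interior_maximal (fun z hz ↦ by_contra fun hzs ↦ hIoo z hzs hz) isOpen_Ioo))

theorem coTotDisc_eq_residual [Nontrivial X] [SigmaCompactSpace X] : coTotDisc X = residual X := by
  apply le_antisymm
  · refine le_countableGenerate_iff_of_countableInterFilter.2 fun U ⟨hUo, hUd⟩ ↦ ?_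
    rw [← compl_compl U]
    refine compl_mem_coTotDisc_of_isClosed hUo.isClosed_compl
      (isTotallyDisconnected_iff_interior_eq_empty.2 ?_)
    rw [interior_compl, hUd.closure_eq, compl_univ]
  · refine le_coTotDisc_iff.2 fun K hK hKtd ↦
      residual_of_dense_open hK.isClosed.isOpen_compl (interior_eq_empty_iff_dense_compl.1 ?_)
    exact isTotallyDisconnected_iff_interior_eq_empty.1 hKtd

end LinearOrder

theorem comap_coTotDisc_eq_residual {Y : Type*} [TopologicalSpace Y] [T2Space Y] {h : ℝ → Y}
    (hh : Continuous h) (hinj : Function.Injective h) : comap h (coTotDisc Y) = residual ℝ :=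
  (comap_coTotDisc hh hinj).trans coTotDisc_eq_residual

instance coTotDisc_neBot {V : Type*} [AddCommGroup V] [Module ℝ V] [TopologicalSpace V]
    [ContinuousSMul ℝ V] [T2Space V] [Nontrivial V] : (coTotDisc V).NeBot := by
  obtain ⟨v, hv⟩ := exists_ne (0 : V)
  have hcomap : comap (fun t : ℝ ↦ t • v) (coTotDisc V) = residual ℝ :=
    comap_coTotDisc_eq_residual (by fun_prop) (smul_left_injective ℝ hv)
  have hres : (residual ℝ).NeBot :=
    ⟨fun h ↦ not_isMeagre_of_isOpen (isOpen_univ (X := ℝ)) univ_nonempty (by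
      rw [IsMeagre, h]; exact mem_bot)⟩
  exact neBot_of_comap (hcomap ▸ hres)

theorem stmt_8_general (hCH : 𝔠 = (ℵ₁ : Cardinal.{v})) (𝕜 : Type*) (V : Type u) [DivisionRing 𝕜]
    [Countable 𝕜] [AddCommGroup V] [Module 𝕜 V] [Module ℝ V] [TopologicalSpace V]
    [IsTopologicalAddGroup V] [ContinuousSMul ℝ V] [PolishSpace V] [Nontrivial V] :
    ∃ A : Set V,
      (∀ h : ℝ → V, Continuous h → Function.Injective h → IsStrongLuzin (h ⁻¹' A)) ∧
      LinearIndependent 𝕜 ((↑) : A → V) ∧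
      Submodule.span 𝕜 A = ⊤ := by
  borelize V
  obtain ⟨A, hA, hindep, hspan⟩ := exists_basis_isStrongLuzinAlong 𝕜
    (continuum_eq_aleph_one_of_universe hCH) (coTotDisc_le_cofinite (X := V))
    (fun _ ↦ exists_measurableSet_subset_of_mem_coTotDisc)
    fun v ↦ tendsto_coTotDisc (Homeomorph.subLeft v)
  refine ⟨A, fun h hh hinj ↦ ?_, hindep, hspan⟩
  have hLuzin := hA.preimage (hh.measurableEmbedding hinj)
  rw [comap_coTotDisc_eq_residual hh hinj] at hLuzin
  exact hLuzin.isStrongLuzin (continuum_eq_aleph_one_of_universe hCH)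

theorem stmt_8 (hCH : Cardinal.continuum = Cardinal.aleph 1) :
    ∃ A : Set (ℝ × ℝ),
      (∀ h : ℝ → ℝ × ℝ, Topology.IsEmbedding h → IsStrongLuzin (h ⁻¹' A)) ∧
      LinearIndependent ℚ ((↑) : A → ℝ × ℝ) ∧
      Submodule.span ℚ A = ⊤ :=
  let ⟨A, hA, hbasis⟩ := stmt_8_general hCH ℚ (ℝ × ℝ)
  ⟨A, fun h hh ↦ hA h hh.continuous hh.injective, hbasis⟩
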